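/- arXiv:0706.0690 — 9 statements merged into one kernel-verified Lean document; each statement's English description precedes it below -/
import Mathlib

section
/- Let $K$ be a field of characteristic $0$, let $V$ be a nonzero finite-dimensional $K$-vector space, and let $u, v$ be natural numbers with $u \neq v$. If $T \colon V^{\otimes u} \to V^{\otimes v}$ is a $K$-linear map that is invariant under the diagonal action of $\mathrm{GL}_K(V)$, i.e. $g^{\otimes v} \circ T = T \circ g^{\otimes u}$ for every invertible $K$-linear automorphism $g$ of $V$, then $T = 0$. -/
open scoped TensorProduct

/-- **First principal theorem of classical invariant theory (vanishing part).**
If `u ≠ v`, any `GL(V)`-equivariant (i.e. invariant) linear map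
`V^{⊗u} → V^{⊗v}` is zero, over a field of characteristic zero. -/
theorem tensorPower_invariant_eq_zero_of_ne
    (K V : Type*) [Field K] [CharZero K] [AddCommGroup V] [Module K V]
    [FiniteDimensional K V] [Nontrivial V] (u v : ℕ) (huv : u ≠ v)
    (T : TensorPower K u V →ₗ[K] TensorPower K v V)
    (hT : ∀ g : V ≃ₗ[K] V,
      (PiTensorProduct.map (fun _ : Fin v => (g : V →ₗ[K] V))).comp T
        = T.comp (PiTensorProduct.map (fun _ : Fin u => (g : V →ₗ[K] V)))) :
    T = 0 := by
  have key : ∀ n : ℕ, PiTensorProduct.map (R := K)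
      (fun _ : Fin n => ((LinearEquiv.smulOfNeZero K V (2 : K) two_ne_zero : V ≃ₗ[K] V) :
        V →ₗ[K] V)) = (2 : K) ^ n • LinearMap.id := by
    intro n
    ext x
    have h := (PiTensorProduct.tprod K (s := fun _ : Fin n => V)).map_smul_univ
      (fun _ => (2 : K)) x
    simp only [Finset.prod_const, Finset.card_univ, Fintype.card_fin] at h
    simp only [LinearMap.compMultilinearMap_apply, PiTensorProduct.map_tprod,
      LinearMap.smul_apply, LinearMap.id_apply]
    exact h
  have h := hT (LinearEquiv.smulOfNeZero K V (2 : K) two_ne_zero)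
  have hne : (2 : K) ^ v - 2 ^ u ≠ 0 := by
    intro h0
    have h1 : (2 : K) ^ v = 2 ^ u := sub_eq_zero.mp h0
    have h2 : (2 : ℕ) ^ v = 2 ^ u := by exact_mod_cast h1
    exact huv (Nat.pow_right_injective le_rfl h2).symm
  ext1
  ext x
  have hx := LinearMap.congr_fun h (PiTensorProduct.tprod K x)
  rw [LinearMap.comp_apply, LinearMap.comp_apply, key v, key u] at hx
  simp only [LinearMap.smul_apply, LinearMap.id_apply, map_smul] at hx
  have h3 : ((2 : K) ^ v - 2 ^ u) • T (PiTensorProduct.tprod K x) = 0 := by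
    rw [sub_smul, hx, sub_self]
  simpa using (smul_eq_zero.mp h3).resolve_left hne
end

section
/- Let $K$ be a field of characteristic $0$, let $V$ be a nonzero finite-dimensional $K$-vector space, and let $u$ be a natural number. If $T \colon V^{\otimes u} \to V^{\otimes u}$ is a $K$-linear endomorphism such that $g^{\otimes u} \circ T = T \circ g^{\otimes u}$ for every invertible $K$-linear automorphism $g$ of $V$, then $T$ belongs to the $K$-linear span of the permutation operators $\{P_\sigma : \sigma \in \mathfrak{S}_u\}$. -/
open scoped TensorProduct

theorem aux_polarize {K M N : Type*} [Field K] [AddCommGroup M] [Module K M]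
    [AddCommGroup N] [Module K N] (u : ℕ)
    (L : MultilinearMap K (fun _ : Fin u => M) N) (hL : ∀ x : M, L (fun _ => x) = 0)
    (φ : Fin u → M) : ∑ σ : Equiv.Perm (Fin u), L (fun i => φ (σ i)) = 0 := by
  classical
  have h0 : ∑ s : Finset (Fin u), (-1 : K) ^ s.card • L (fun _ => ∑ j ∈ s, φ j) = 0 := by
    simp [hL]
  have h1 : ∀ s : Finset (Fin u), L (fun _ => ∑ j ∈ s, φ j)
      = ∑ r : Fin u → Fin u, if ∀ i, r i ∈ s then L (fun i => φ (r i)) else 0 := by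
    intro s
    rw [L.map_sum_finset (fun _ j => φ j) (fun _ => s), ← Finset.sum_filter]
    apply Finset.sum_congr _ (fun _ _ => rfl)
    ext r
    simp
  simp only [h1, Finset.smul_sum] at h0
  rw [Finset.sum_comm] at h0
  have h2 : ∀ r : Fin u → Fin u, ¬ Function.Bijective r →
      ∑ s : Finset (Fin u), (-1 : K) ^ s.card •
        (if ∀ i, r i ∈ s then L (fun i => φ (r i)) else 0) = 0 := by
    intro r hr
    have hr' : ¬ Function.Surjective r := fun h => hr (Finite.surjective_iff_bijective.1 h)
    simp only [Function.Surjective, not_forall, not_exists] at hr'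
    obtain ⟨j, hj⟩ := hr'
    have key : ∀ s : Finset (Fin u), (∀ i, r i ∈ symmDiff s {j}) ↔ ∀ i, r i ∈ s := by
      intro s
      refine forall_congr' fun i => ?_
      simp [Finset.mem_symmDiff, hj i]
    have hc : ∀ s : Finset (Fin u), (-1 : K) ^ (symmDiff s {j}).card = - (-1) ^ s.card := by
      intro s
      by_cases h : j ∈ s
      · have : symmDiff s {j} = s.erase j := by
          ext x; simp only [Finset.mem_symmDiff, Finset.mem_singleton, Finset.mem_erase]; grind
        rw [this, ← Finset.card_erase_add_one h, pow_succ]; ring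
      · have : symmDiff s {j} = insert j s := by
          ext x; simp only [Finset.mem_symmDiff, Finset.mem_singleton, Finset.mem_insert]; grind
        rw [this, Finset.card_insert_of_notMem h, pow_succ]; ring
    refine Finset.sum_involution (fun s _ => symmDiff s {j}) ?_ ?_ ?_ ?_
    · intro s _
      simp only [key, hc, neg_smul, add_neg_cancel]
    · intro s _ _ h
      have := congrArg (j ∈ ·) h
      simp [Finset.mem_symmDiff] at this
    · simp
    · intro s _
      simp [symmDiff_assoc]
  have h3 : ∀ r : Fin u → Fin u, Function.Bijective r →
      ∑ s : Finset (Fin u), (-1 : K) ^ s.card •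
        (if ∀ i, r i ∈ s then L (fun i => φ (r i)) else 0) = (-1 : K) ^ u • L (fun i => φ (r i)) := by
    intro r hr
    rw [Finset.sum_eq_single Finset.univ]
    · simp
    · intro s _ hs
      rw [if_neg, smul_zero]
      intro h
      apply hs
      ext x
      obtain ⟨i, rfl⟩ := hr.2 x
      simp [h i]
    · simp
  rw [← Finset.sum_filter_add_sum_filter_not Finset.univ (fun r : Fin u → Fin u => Function.Bijective r),
    Finset.sum_congr rfl (fun r hr => h3 r (Finset.mem_filter.1 hr).2),
    Finset.sum_eq_zero (s := Finset.univ.filter (fun r : Fin u → Fin u => ¬ Function.Bijective r))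
      (fun r hr => h2 r (Finset.mem_filter.1 hr).2), add_zero, ← Finset.smul_sum] at h0
  have h4 := (smul_eq_zero.1 h0).resolve_left (pow_ne_zero _ (neg_ne_zero.2 one_ne_zero))
  rw [← h4]
  refine Finset.sum_bij (fun σ _ => (σ : Fin u → Fin u)) ?_ ?_ ?_ ?_
  · intro σ _; exact Finset.mem_filter.2 ⟨Finset.mem_univ _, σ.bijective⟩
  · intro a _ b _ h; exact DFunLike.coe_injective h
  · intro r hr
    exact ⟨Equiv.ofBijective r (Finset.mem_filter.1 hr).2, by simp, rfl⟩
  · intro _ _; rfl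

theorem aux_dense {K V N : Type*} [Field K] [CharZero K] [AddCommGroup V] [Module K V]
    [FiniteDimensional K V] [AddCommGroup N] [Module K N] (u : ℕ)
    (L : MultilinearMap K (fun _ : Fin u => V →ₗ[K] V) N)
    (hL : ∀ g : V ≃ₗ[K] V, L (fun _ => (g : V →ₗ[K] V)) = 0) (ψ : V →ₗ[K] V) :
    L (fun _ => ψ) = 0 := by
  classical
  rw [← Module.forall_dual_apply_eq_zero_iff K]
  intro l
  let p : Polynomial K := ∑ s : Finset (Fin u),
    Polynomial.C (l (L (s.piecewise (fun _ => ψ) (fun _ => 1)))) * Polynomial.X ^ sᶜ.card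
  have hp : ∀ t : K, p.eval t = l (L (fun _ => ψ + t • 1)) := by
    intro t
    have : (fun _ : Fin u => ψ + t • (1 : V →ₗ[K] V)) = (fun _ => ψ) + (fun _ => t • 1) := rfl
    rw [this, L.map_add_univ, map_sum, Polynomial.eval_finsetSum]
    refine Finset.sum_congr rfl fun s _ => ?_
    have h := L.map_piecewise_smul (fun _ => t) (s.piecewise (fun _ => ψ) (fun _ => 1)) sᶜ
    have e : (sᶜ).piecewise (fun i => t • (s.piecewise (fun _ => ψ) (fun _ => (1 : V →ₗ[K] V))) i)
        (s.piecewise (fun _ => ψ) (fun _ => 1))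
        = s.piecewise (fun _ => ψ) (fun _ => t • 1) := by
      ext1 i
      by_cases hi : i ∈ s <;> simp [Finset.piecewise, hi]
    rw [e] at h
    rw [h]
    rw [Finset.prod_const, map_smul, smul_eq_mul, mul_comm]
    simp only [Polynomial.eval_mul, Polynomial.eval_C, Polynomial.eval_pow, Polynomial.eval_X]
  have hz : p = 0 := by
    apply Polynomial.eq_zero_of_infinite_isRoot
    have hfin : (spectrum K (-ψ : Module.End K V)).Finite := Module.End.finite_spectrum _
    refine hfin.infinite_compl.mono ?_
    intro t ht
    have hu : IsUnit (ψ + t • (1 : V →ₗ[K] V)) := by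
      have := spectrum.notMem_iff.1 ht
      rw [sub_neg_eq_add, add_comm, Algebra.algebraMap_eq_smul_one] at this
      exact this
    obtain ⟨g, hg⟩ := hu
    have := hL (LinearMap.GeneralLinearGroup.toLinearEquiv g)
    change p.eval t = 0
    rw [hp, ← hg]
    have h' : ((LinearMap.GeneralLinearGroup.toLinearEquiv g : V ≃ₗ[K] V) : V →ₗ[K] V)
      = (g : V →ₗ[K] V) := by ext; rfl
    rw [h'] at this
    rw [this, map_zero]
  have := hp 0
  rw [hz] at this
  simpa using this.symm

theorem aux_span {K V : Type*} [Field K] [AddCommGroup V] [Module K V]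
    [FiniteDimensional K V] (u : ℕ) :
    Submodule.span K (Set.range fun φ : Fin u → (V →ₗ[K] V) =>
      (PiTensorProduct.map φ : TensorPower K u V →ₗ[K] TensorPower K u V)) = ⊤ := by
  classical
  rw [eq_top_iff]
  rintro f -
  let b := Module.finBasis K V
  let B : Module.Basis (Fin u → Fin (Module.finrank K V)) K (TensorPower K u V) :=
    Basis.piTensorProduct (fun _ : Fin u => b)
  have hf : f = ∑ q, ∑ p, (B.repr (f (B q)) p) •
      (PiTensorProduct.map (fun i => (b.coord (q i)).smulRight (b (p i))) :
        TensorPower K u V →ₗ[K] TensorPower K u V) := by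
    refine B.ext fun r => ?_
    have key : ∀ p q, (PiTensorProduct.map (fun i => (b.coord (q i)).smulRight (b (p i))) :
        TensorPower K u V →ₗ[K] TensorPower K u V) (B r) = if q = r then B p else 0 := by
      intro p q
      simp only [B, Basis.piTensorProduct_apply, PiTensorProduct.map_tprod]
      simp only [LinearMap.smulRight_apply]
      rw [MultilinearMap.map_smul_univ]
      split_ifs with h
      · subst h; simp
      · obtain ⟨i, hi⟩ := Function.ne_iff.1 h
        rw [Finset.prod_eq_zero (Finset.mem_univ i), zero_smul]
        simp [Finsupp.single_apply, Ne.symm hi]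
    simp only [LinearMap.sum_apply, LinearMap.smul_apply, key]
    rw [Finset.sum_eq_single r]
    · simp [B.sum_repr]
    · intro q _ h; simp [h]
    · simp
  rw [hf]
  exact Submodule.sum_mem _ fun q _ => Submodule.sum_mem _ fun p _ =>
    Submodule.smul_mem _ _ (Submodule.subset_span ⟨_, rfl⟩)

/-- The permutation representation on the tensor power. -/
noncomputable def auxRho (K V : Type*) [Field K] [AddCommGroup V] [Module K V] (u : ℕ) :
    Representation K (Equiv.Perm (Fin u)) (TensorPower K u V) where
  toFun σ := (PiTensorProduct.reindex K (fun _ : Fin u => V) σ).toLinearMap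
  map_one' := by
    ext x
    simp [PiTensorProduct.reindex_tprod]
    rfl
  map_mul' σ τ := by
    ext x
    simp [PiTensorProduct.reindex_tprod]
    rfl

theorem aux_rho_map {K V : Type*} [Field K] [AddCommGroup V] [Module K V] (u : ℕ)
    (σ : Equiv.Perm (Fin u)) (φ : Fin u → (V →ₗ[K] V)) :
    auxRho K V u σ ∘ₗ PiTensorProduct.map φ
      = PiTensorProduct.map (fun i => φ (σ.symm i)) ∘ₗ auxRho K V u σ :=
  (PiTensorProduct.map_comp_reindex_eq φ σ).symm

theorem aux_comm {K V : Type*} [Field K] [CharZero K] [AddCommGroup V] [Module K V]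
    [FiniteDimensional K V] (u : ℕ)
    (T : TensorPower K u V →ₗ[K] TensorPower K u V)
    (hT : ∀ g : V ≃ₗ[K] V,
      (PiTensorProduct.map (fun _ : Fin u => (g : V →ₗ[K] V))).comp T
        = T.comp (PiTensorProduct.map (fun _ : Fin u => (g : V →ₗ[K] V))))
    (f : TensorPower K u V →ₗ[K] TensorPower K u V)
    (hf : ∀ σ, auxRho K V u σ ∘ₗ f = f ∘ₗ auxRho K V u σ) : f ∘ₗ T = T ∘ₗ f := by
  let C : (TensorPower K u V →ₗ[K] TensorPower K u V) →ₗ[K]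
      (TensorPower K u V →ₗ[K] TensorPower K u V) :=
    LinearMap.mulRight K (T : Module.End K (TensorPower K u V)) -
      LinearMap.mulLeft K (T : Module.End K (TensorPower K u V))
  have hC : ∀ h, C h = h ∘ₗ T - T ∘ₗ h := fun h => rfl
  let L : MultilinearMap K (fun _ : Fin u => V →ₗ[K] V)
      (TensorPower K u V →ₗ[K] TensorPower K u V) :=
    C.compMultilinearMap (PiTensorProduct.mapMultilinear K (fun _ => V) (fun _ => V))
  have hLa : ∀ φ, L φ = C (PiTensorProduct.map φ) := fun φ => rfl
  have hL : ∀ ψ, L (fun _ => ψ) = 0 := by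
    apply aux_dense
    intro g
    rw [hLa, hC, sub_eq_zero]
    exact hT g
  have hP := aux_polarize u L hL
  have avg : ∀ h : TensorPower K u V →ₗ[K] TensorPower K u V,
      ∑ σ : Equiv.Perm (Fin u), C (auxRho K V u σ ∘ₗ h ∘ₗ auxRho K V u σ⁻¹) = 0 := by
    intro h
    have hh : h ∈ Submodule.span K (Set.range fun φ : Fin u → (V →ₗ[K] V) =>
      (PiTensorProduct.map φ : TensorPower K u V →ₗ[K] TensorPower K u V)) := by
      rw [aux_span]; trivial
    induction hh using Submodule.span_induction with
    | mem x hx =>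
      obtain ⟨φ, rfl⟩ := hx
      rw [← hP φ, ← Equiv.sum_comp (Equiv.inv (Equiv.Perm (Fin u)))]
      refine Finset.sum_congr rfl fun σ _ => ?_
      rw [hLa, ← LinearMap.comp_assoc, aux_rho_map, LinearMap.comp_assoc]
      have : auxRho K V u (Equiv.inv (Equiv.Perm (Fin u)) σ) ∘ₗ
          auxRho K V u (Equiv.inv (Equiv.Perm (Fin u)) σ)⁻¹ = LinearMap.id := by
        rw [← Module.End.mul_eq_comp, ← map_mul, mul_inv_cancel, map_one]; rfl
      rw [this, LinearMap.comp_id]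
      rfl
    | zero => simp
    | add x y _ _ hx hy =>
      simp only [LinearMap.add_comp, LinearMap.comp_add, map_add, Finset.sum_add_distrib, hx, hy,
        add_zero]
    | smul a x _ hx =>
      simp only [LinearMap.smul_comp, LinearMap.comp_smul, map_smul, ← Finset.smul_sum, hx,
        smul_zero]
  have h1 := avg f
  have h2 : ∀ σ : Equiv.Perm (Fin u), auxRho K V u σ ∘ₗ f ∘ₗ auxRho K V u σ⁻¹ = f := by
    intro σ
    rw [← LinearMap.comp_assoc, hf, LinearMap.comp_assoc, ← Module.End.mul_eq_comp (auxRho K V u σ),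
      ← map_mul, mul_inv_cancel, map_one]
    rfl
  simp only [h2, Finset.sum_const, Finset.card_univ] at h1
  rw [← Nat.cast_smul_eq_nsmul K, smul_eq_zero] at h1
  have h3 := h1.resolve_left (Nat.cast_ne_zero.2 Fintype.card_ne_zero)
  rw [hC, sub_eq_zero] at h3
  exact h3

/-- **First principal theorem of classical invariant theory.**
Over a field of characteristic zero, a `GL(V)`-invariant endomorphism of `V^{⊗u}`
is a linear combination of the permutation operators permuting the tensor factors. -/
theorem tensorPower_invariant_mem_span_perm
    (K V : Type*) [Field K] [CharZero K] [AddCommGroup V] [Module K V]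
    [FiniteDimensional K V] [Nontrivial V] (u : ℕ)
    (T : TensorPower K u V →ₗ[K] TensorPower K u V)
    (hT : ∀ g : V ≃ₗ[K] V,
      (PiTensorProduct.map (fun _ : Fin u => (g : V →ₗ[K] V))).comp T
        = T.comp (PiTensorProduct.map (fun _ : Fin u => (g : V →ₗ[K] V)))) :
    T ∈ Submodule.span K
      (Set.range fun σ : Equiv.Perm (Fin u) =>
        ((PiTensorProduct.reindex K (fun _ : Fin u => V) σ).toLinearMap :
          TensorPower K u V →ₗ[K] TensorPower K u V)) := by
  classical
  let ρ := auxRho K V u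
  haveI : NeZero (Nat.card (Equiv.Perm (Fin u)) : K) :=
    ⟨Nat.cast_ne_zero.2 Nat.card_pos.ne'⟩
  let F : Module.End (Module.End (MonoidAlgebra K (Equiv.Perm (Fin u))) ρ.asModule) ρ.asModule :=
    { toFun := fun x => ρ.asModuleEquiv.symm (T (ρ.asModuleEquiv x))
      map_add' := fun x y => by simp
      map_smul' := fun e x => by
        let f : TensorPower K u V →ₗ[K] TensorPower K u V :=
          ρ.asModuleEquiv.toLinearMap ∘ₗ (e.restrictScalars K) ∘ₗ ρ.asModuleEquiv.symm.toLinearMap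
        have hf : f ∘ₗ T = T ∘ₗ f := by
          refine aux_comm u T hT f fun σ => ?_
          ext1
          ext x
          have h := e.map_smul (MonoidAlgebra.of K _ σ)
            (ρ.asModuleEquiv.symm (PiTensorProduct.tprod K x))
          rw [← Representation.asModuleEquiv_symm_map_rho] at h
          have h' := congrArg ρ.asModuleEquiv h
          rw [Representation.asModuleEquiv_map_smul, Representation.asAlgebraHom_of] at h'
          exact h'.symm
        have := LinearMap.congr_fun hf (ρ.asModuleEquiv x)
        exact congrArg ρ.asModuleEquiv.symm this.symm }
  obtain ⟨s, hs⟩ := (inferInstance : Module.Finite K (TensorPower K u V)).fg_top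
  obtain ⟨r, hr⟩ := jacobson_density F (s.image ρ.asModuleEquiv.symm)
  have hTr : T = ρ.asAlgebraHom r := by
    refine LinearMap.ext_on hs fun x hx => ?_
    have h := congrArg ρ.asModuleEquiv (hr (ρ.asModuleEquiv.symm x) (Finset.mem_image_of_mem _ hx))
    rw [Representation.asModuleEquiv_map_smul] at h
    exact h
  rw [hTr, Representation.asAlgebraHom_def, MonoidAlgebra.lift_apply]
  exact Submodule.sum_mem _ fun σ _ => Submodule.smul_mem _ _ (Submodule.subset_span ⟨σ, rfl⟩)
end

section
/- Let $K$ be a field of characteristic $0$, let $V_1, \ldots, V_n$ be nonzero finite-dimensional $K$-vector spaces, and let $\alpha \colon \{1,\ldots,n\} \to \mathbb{N}$ be a map. Write $V^\alpha = V_1^{\otimes \alpha(1)} \otimes \cdots \otimes V_n^{\otimes \alpha(n)}$. If $T \colon V^\alpha \to V^\alpha$ is a $K$-linear endomorphism such that $(g_1^{\otimes \alpha(1)} \otimes \cdots \otimes g_n^{\otimes \alpha(n)}) \circ T = T \circ (g_1^{\otimes \alpha(1)} \otimes \cdots \otimes g_n^{\otimes \alpha(n)})$ for all $(g_1,\ldots,g_n)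 \in \mathrm{GL}_K(V_1) \times \cdots \times \mathrm{GL}_K(V_n)$, then $T$ lies in the $K$-linear span of the operators $P_{\sigma_1} \otimes \cdots \otimes P_{\sigma_n}$ for $(\sigma_1,\ldots,\sigma_n) \in \mathfrak{S}_{\alpha(1)} \times \cdots \times \mathfrak{S}_{\alpha(n)}$, where $P_{\sigma_i}$ permutes the tensor factors of $V_i^{\otimes \alpha(i)}$. -/
open scoped TensorProduct

namespace MTI

theorem polarize {K E F : Type*} [Field K] [AddCommGroup E] [Module K E] [AddCommGroup F]
    [Module K F] {m : ℕ} (M : MultilinearMap K (fun _ : Fin m => E) F) (f : Fin m → E) :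
    ∑ σ : Equiv.Perm (Fin m), M (fun j => f (σ j)) =
      ∑ u : Finset (Fin m), (-1 : ℤ) ^ u.card • M (fun _ => ∑ j ∈ uᶜ, f j) := by
  classical
  have h1 : ∀ u : Finset (Fin m), M (fun _ => ∑ j ∈ uᶜ, f j) =
      ∑ r : Fin m → Fin m, if u ⊆ (Finset.univ.image r)ᶜ then M (fun j => f (r j)) else 0 := by
    intro u
    rw [M.map_sum_finset (fun _ j => f j) (fun _ => uᶜ), ← Finset.sum_filter]
    apply Finset.sum_congr _ (fun _ _ => rfl)
    ext r
    simp only [Fintype.mem_piFinset, Finset.mem_compl, Finset.mem_filter, Finset.mem_univ, true_and,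
      Finset.subset_iff, Finset.mem_image, not_exists]
    grind
  simp_rw [h1, Finset.smul_sum]
  rw [Finset.sum_comm]
  have h2 : ∀ r : Fin m → Fin m, (∑ u : Finset (Fin m), (-1 : ℤ) ^ u.card •
      (if u ⊆ (Finset.univ.image r)ᶜ then M (fun j => f (r j)) else 0)) =
      if Function.Bijective r then M (fun j => f (r j)) else 0 := by
    intro r
    simp_rw [smul_ite, smul_zero]
    rw [← Finset.sum_filter, ← Finset.sum_smul]
    have : Finset.univ.filter (fun u => u ⊆ (Finset.univ.image r)ᶜ) =
      ((Finset.univ.image r)ᶜ).powerset := by ext; simp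
    rw [this, Finset.sum_powerset_neg_one_pow_card]
    have h3 : (Finset.univ.image r)ᶜ = ∅ ↔ Function.Bijective r := by
      rw [← Finite.surjective_iff_bijective, Finset.compl_eq_empty_iff, Finset.eq_univ_iff_forall]
      simp [Function.Surjective]
    by_cases h : Function.Bijective r
    · rw [if_pos (h3.2 h), if_pos h, one_smul]
    · rw [if_neg (fun h' => h (h3.1 h')), if_neg h, zero_smul]
  simp_rw [h2]
  rw [← Finset.sum_filter]
  refine Finset.sum_bij' (fun σ _ => (σ : Fin m → Fin m))
    (fun r hr => Equiv.ofBijective r (Finset.mem_filter.1 hr).2) ?_ ?_ ?_ ?_ ?_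
  · intro σ _; exact Finset.mem_filter.2 ⟨Finset.mem_univ _, σ.bijective⟩
  · intro r hr; exact Finset.mem_univ _
  · intro σ _; ext; simp
  · intro r hr; rfl
  · intro σ _; rfl

theorem const_mem {K V F : Type*} [Field K] [CharZero K] [AddCommGroup V] [Module K V]
    [FiniteDimensional K V] [AddCommGroup F] [Module K F] {m : ℕ}
    (M : MultilinearMap K (fun _ : Fin m => V →ₗ[K] V) F) (N : Submodule K F)
    (hN : ∀ g : V ≃ₗ[K] V, M (fun _ => (g : V →ₗ[K] V)) ∈ N) (h : V →ₗ[K] V) :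
    M (fun _ => h) ∈ N := by
  classical
  by_contra hn
  obtain ⟨φ, hφ, hφN⟩ := Submodule.exists_le_ker_of_notMem hn
  let p : Polynomial K := ∑ s : Finset (Fin m),
    Polynomial.C (φ (M (s.piecewise (fun _ => h) (fun _ => LinearMap.id)))) * Polynomial.X ^ (sᶜ).card
  have hp : ∀ t : K, p.eval t = φ (M (fun _ => h + t • LinearMap.id)) := by
    intro t
    have := M.map_add_univ (fun _ => h) (fun _ => t • LinearMap.id)
    have e : ((fun _ => h) + (fun _ => t • LinearMap.id) : Fin m → (V →ₗ[K] V)) =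
      fun _ => h + t • LinearMap.id := rfl
    rw [e] at this
    rw [this, map_sum, Polynomial.eval_finsetSum]
    refine Finset.sum_congr rfl fun s _ => ?_
    have h4 := M.map_piecewise_smul (fun _ => t) (s.piecewise (fun _ => h) (fun _ => LinearMap.id)) sᶜ
    have e2 : (sᶜ.piecewise (fun i => t • (s.piecewise (fun _ => h) (fun _ => LinearMap.id) : Fin m → (V →ₗ[K] V)) i) (s.piecewise (fun _ => h) (fun _ => LinearMap.id))) = (s.piecewise (fun _ => h) (fun _ => t • LinearMap.id) : Fin m → (V →ₗ[K] V)) := by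
      ext i : 1
      by_cases hi : i ∈ s <;> simp [hi]
    rw [e2] at h4
    rw [h4, Finset.prod_const, map_smul, Polynomial.eval_mul, Polynomial.eval_C,
      Polynomial.eval_pow, Polynomial.eval_X, smul_eq_mul, mul_comm]
  have hz : p = 0 := by
    apply Polynomial.eq_zero_of_infinite_isRoot
    have hfin := Module.End.finite_spectrum (-h)
    refine Set.Infinite.mono ?_ hfin.infinite_compl
    intro t ht
    have hu : IsUnit (algebraMap K (Module.End K V) t - (-h)) := by
      simpa [spectrum.mem_iff] using ht
    obtain ⟨w, hw⟩ := hu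
    have := hN (LinearMap.GeneralLinearGroup.generalLinearEquiv K V w)
    have e : ((LinearMap.GeneralLinearGroup.generalLinearEquiv K V w : V ≃ₗ[K] V) : V →ₗ[K] V) =
        h + t • LinearMap.id := by
      have : ((LinearMap.GeneralLinearGroup.generalLinearEquiv K V w : V ≃ₗ[K] V) : V →ₗ[K] V) = w := rfl
      rw [this, hw, sub_neg_eq_add, add_comm]; rfl
    rw [e] at this
    show p.eval t = 0
    rw [hp]
    exact hφN this
  apply hφ
  have := hp 0
  rw [hz] at this
  simpa using this.symm

theorem span_map {K : Type*} [Field K] {n : ℕ} {W : Fin n → Type*}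
    [∀ i, AddCommGroup (W i)] [∀ i, Module K (W i)] [∀ i, FiniteDimensional K (W i)]
    (S : (⨂[K] i, W i) →ₗ[K] ⨂[K] i, W i) :
    S ∈ Submodule.span K (Set.range fun f : ∀ i, W i →ₗ[K] W i => PiTensorProduct.map f) := by
  classical
  let b := fun i => Module.finBasis K (W i)
  let B := Basis.piTensorProduct b
  have key : S = ∑ q, ∑ p, B.repr (S (B q)) p •
      PiTensorProduct.map (fun i => ((b i).coord (q i)).smulRight (b i (p i))) := by
    refine B.ext fun q' => ?_
    simp only [LinearMap.sum_apply, LinearMap.smul_apply]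
    have : ∀ q p, PiTensorProduct.map (fun i => ((b i).coord (q i)).smulRight (b i (p i))) (B q') =
      (if q' = q then (1:K) else 0) • B p := by
      intro q p
      simp only [B, Basis.piTensorProduct_apply, PiTensorProduct.map_tprod, LinearMap.smulRight_apply]
      rw [MultilinearMap.map_smul_univ]
      congr 1
      simp [Finsupp.single_apply, Fintype.prod_ite_zero, ← funext_iff]
    simp_rw [this]
    simp only [ite_smul, one_smul, zero_smul, smul_ite, smul_zero]
    rw [Finset.sum_comm]
    simp [B.sum_repr]
  rw [key]
  exact Submodule.sum_mem _ fun q _ => Submodule.sum_mem _ fun p _ =>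
    Submodule.smul_mem _ _ (Submodule.subset_span ⟨_, rfl⟩)

/-- The permutation operators on a tensor power. -/
noncomputable def permOp (K V : Type*) [Field K] [AddCommGroup V] [Module K V] (m : ℕ) :
    Equiv.Perm (Fin m) →* Module.End K (⨂[K] _ : Fin m, V) where
  toFun σ := (PiTensorProduct.reindex K (fun _ : Fin m => V) σ).toLinearMap
  map_one' := by
    apply PiTensorProduct.ext
    ext v
    exact PiTensorProduct.reindex_tprod (R := K) (s := fun _ : Fin m => V) 1 v
  map_mul' σ τ := by
    apply PiTensorProduct.ext
    ext v
    refine (PiTensorProduct.reindex_tprod (R := K) (s := fun _ : Fin m => V) (σ * τ) v).trans ?_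
    symm
    refine (congrArg (PiTensorProduct.reindex K (fun _ : Fin m => V) σ)
      (PiTensorProduct.reindex_tprod (R := K) (s := fun _ : Fin m => V) τ v)).trans ?_
    exact PiTensorProduct.reindex_tprod (R := K) (s := fun _ : Fin m => V) σ _

theorem permOp_tprod {K V : Type*} [Field K] [AddCommGroup V] [Module K V] {m : ℕ}
    (σ : Equiv.Perm (Fin m)) (v : Fin m → V) :
    permOp K V m σ (PiTensorProduct.tprod K v) = PiTensorProduct.tprod K (fun j => v (σ⁻¹ j)) :=
  PiTensorProduct.reindex_tprod (R := K) (s := fun _ : Fin m => V) σ v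

theorem permOp_conj {K V : Type*} [Field K] [AddCommGroup V] [Module K V] {m : ℕ}
    (σ : Equiv.Perm (Fin m)) (f : Fin m → (V →ₗ[K] V)) :
    permOp K V m σ ∘ₗ PiTensorProduct.map f ∘ₗ permOp K V m σ⁻¹ =
      PiTensorProduct.mapMultilinear K (fun _ : Fin m => V) (fun _ : Fin m => V)
        (fun j => f (σ⁻¹ j)) := by
  apply PiTensorProduct.ext
  ext v
  simp only [LinearMap.compMultilinearMap_apply, LinearMap.comp_apply, permOp_tprod,
    PiTensorProduct.map_tprod, PiTensorProduct.mapMultilinear_apply]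
  congr 1
  funext j
  exact congrArg (fun k => f (σ⁻¹ j) (v k)) (σ.apply_symm_apply j)

theorem avg_mem {K V : Type*} [Field K] [CharZero K] [AddCommGroup V] [Module K V]
    [FiniteDimensional K V] {m : ℕ} (x : (⨂[K] _ : Fin m, V) →ₗ[K] (⨂[K] _ : Fin m, V)) :
    ∑ σ : Equiv.Perm (Fin m), permOp K V m σ ∘ₗ x ∘ₗ permOp K V m σ⁻¹ ∈
     Submodule.span K (Set.range fun g : V ≃ₗ[K] V =>
       PiTensorProduct.map (fun _ : Fin m => (g : V →ₗ[K] V))) := by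
  have hx := span_map (W := fun _ : Fin m => V) x
  induction hx using Submodule.span_induction with
  | zero => simp
  | add x y _ _ hx hy =>
    simp only [LinearMap.add_comp, LinearMap.comp_add, Finset.sum_add_distrib]
    exact add_mem hx hy
  | smul c x _ hx =>
    simp only [LinearMap.smul_comp, LinearMap.comp_smul, ← Finset.smul_sum]
    exact Submodule.smul_mem _ _ hx
  | mem x hx =>
    obtain ⟨f, rfl⟩ := hx
    simp only [permOp_conj]
    rw [Fintype.sum_equiv (Equiv.inv (Equiv.Perm (Fin m))) (fun σ : Equiv.Perm (Fin m) =>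
      PiTensorProduct.mapMultilinear K (fun _ : Fin m => V) (fun _ : Fin m => V)
        (fun j => f (σ⁻¹ j))) (fun σ : Equiv.Perm (Fin m) =>
      PiTensorProduct.mapMultilinear K (fun _ : Fin m => V) (fun _ : Fin m => V)
        (fun j => f (σ j))) (fun _ => rfl), polarize]
    refine Submodule.sum_mem _ fun u _ => zsmul_mem ?_ _
    apply const_mem
    intro g
    exact Submodule.subset_span ⟨g, rfl⟩

theorem density {K G W : Type*} [Field K] [CharZero K] [Group G] [Finite G] [AddCommGroup W]
    [Module K W] [FiniteDimensional K W] (ρ : Representation K G W) (T : W →ₗ[K] W)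
    (h : ∀ S : W →ₗ[K] W, (∀ g, S ∘ₗ ρ g = ρ g ∘ₗ S) → S ∘ₗ T = T ∘ₗ S) :
    T ∈ Submodule.span K (Set.range ρ) := by
  classical
  let : Fintype G := Fintype.ofFinite G
  have : NeZero (Nat.card G : K) := ⟨by simp [Nat.card_pos.ne']⟩
  have : IsSemisimpleModule (MonoidAlgebra K G) ρ.asModule := inferInstance
  let T' : Module.End (Module.End (MonoidAlgebra K G) ρ.asModule) ρ.asModule :=
    { toFun := fun w => ρ.asModuleEquiv.symm (T (ρ.asModuleEquiv w))
      map_add' := by intros; simp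
      map_smul' := by
        intro S w
        let S' : W →ₗ[K] W := ρ.asModuleEquiv.toLinearMap ∘ₗ (S.restrictScalars K) ∘ₗ ρ.asModuleEquiv.symm.toLinearMap
        have := h S' (by
          intro g
          ext w
          simp only [S', LinearMap.comp_apply, LinearEquiv.coe_coe, LinearMap.restrictScalars_apply,
            Representation.asModuleEquiv_symm_map_rho, map_smul,
            Representation.asModuleEquiv_map_smul]
          simp)
        have := LinearMap.congr_fun this (ρ.asModuleEquiv w)
        simp only [S', LinearMap.comp_apply, LinearEquiv.coe_coe, LinearMap.restrictScalars_apply,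
          LinearEquiv.symm_apply_apply] at this
        simp only [Module.End.smul_def, RingHom.id_apply, ← this, LinearEquiv.symm_apply_apply] }
  let b := Module.finBasis K W
  obtain ⟨r, hr⟩ := jacobson_density T' (Finset.univ.image fun i => ρ.asModuleEquiv.symm (b i))
  have hT : T = ρ.asAlgebraHom r := by
    refine b.ext fun i => ?_
    have := hr (ρ.asModuleEquiv.symm (b i)) (by simp)
    have := congrArg ρ.asModuleEquiv this
    rw [Representation.asModuleEquiv_map_smul] at this
    simpa [T'] using this
  rw [hT, Representation.asAlgebraHom_def, MonoidAlgebra.lift_apply]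
  exact Submodule.sum_mem _ fun g _ => Submodule.smul_mem _ _ (Submodule.subset_span ⟨g, rfl⟩)

theorem commute_span {K : Type*} [Field K] {n : ℕ} {W : Fin n → Type*}
    [∀ i, AddCommGroup (W i)] [∀ i, Module K (W i)]
    (T : Module.End K (⨂[K] i, W i)) (A : ∀ i, Set (W i →ₗ[K] W i))
    (h : ∀ f : ∀ i, W i →ₗ[K] W i, (∀ i, f i ∈ A i) →
      PiTensorProduct.map f ∘ₗ T = T ∘ₗ PiTensorProduct.map f) (s : Finset (Fin n)) :
    ∀ f : ∀ i, W i →ₗ[K] W i, (∀ i ∈ s, f i ∈ Submodule.span K (A i)) → (∀ i ∉ s, f i ∈ A i) →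
      PiTensorProduct.map f ∘ₗ T = T ∘ₗ PiTensorProduct.map f := by
  classical
  induction s using Finset.induction_on with
  | empty => intro f _ hf; exact h f (fun i => hf i (by simp))
  | insert a s ha ih =>
    intro f hf hf'
    have key : ∀ y ∈ Submodule.span K (A a),
        PiTensorProduct.map (Function.update f a y) ∘ₗ T
          = T ∘ₗ PiTensorProduct.map (Function.update f a y) := by
      intro y hy
      induction hy using Submodule.span_induction with
      | zero =>
        have : PiTensorProduct.map (Function.update f a 0) = 0 :=
          (PiTensorProduct.mapMultilinear K W W).map_update_zero f a
        rw [this]; simp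
      | add x y _ _ hx hy =>
        rw [PiTensorProduct.map_update_add, LinearMap.add_comp, LinearMap.comp_add, hx, hy]
      | smul c x _ hx =>
        rw [PiTensorProduct.map_update_smul, LinearMap.smul_comp, LinearMap.comp_smul, hx]
      | mem y hy =>
        apply ih
        · intro i hi
          have : i ≠ a := by rintro rfl; exact ha hi
          rw [Function.update_of_ne this]
          exact hf i (by simp [hi])
        · intro i hi
          by_cases e : i = a
          · subst e; simpa using hy
          · rw [Function.update_of_ne e]; exact hf' i (by simp [e, hi])
    have := key (f a) (hf a (by simp))
    rwa [Function.update_eq_self] at this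

theorem generic {K : Type*} [Field K] [CharZero K] {n : ℕ} {W : Fin n → Type*}
    [∀ i, AddCommGroup (W i)] [∀ i, Module K (W i)] [∀ i, FiniteDimensional K (W i)]
    {G : Fin n → Type*} [∀ i, Group (G i)] [∀ i, Fintype (G i)]
    (R : ∀ i, G i →* Module.End K (W i))
    (T : (⨂[K] i, W i) →ₗ[K] (⨂[K] i, W i)) (A : ∀ i, Set (W i →ₗ[K] W i))
    (hR : ∀ i (x : W i →ₗ[K] W i), ∑ σ, R i σ ∘ₗ x ∘ₗ R i σ⁻¹ ∈ Submodule.span K (A i))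
    (hA : ∀ f : ∀ i, W i →ₗ[K] W i, (∀ i, f i ∈ A i) →
      PiTensorProduct.map f ∘ₗ T = T ∘ₗ PiTensorProduct.map f) :
    T ∈ Submodule.span K (Set.range fun σ : ∀ i, G i => PiTensorProduct.map fun i => R i (σ i)) := by
  classical
  let ρ : Representation K (∀ i, G i) (⨂[K] i, W i) :=
    { toFun := fun σ => PiTensorProduct.map (fun i => R i (σ i))
      map_one' := by
        simp only [Pi.one_apply, map_one]
        exact PiTensorProduct.map_id
      map_mul' := by
        intro σ τ
        simp only [Pi.mul_apply, map_mul]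
        exact PiTensorProduct.map_comp _ _ }
  refine density ρ T fun S hS => ?_
  -- averaging
  have havg : ∀ X : (⨂[K] i, W i) →ₗ[K] ⨂[K] i, W i,
      (∑ σ, ρ σ ∘ₗ X ∘ₗ ρ σ⁻¹) ∘ₗ T = T ∘ₗ (∑ σ, ρ σ ∘ₗ X ∘ₗ ρ σ⁻¹) := by
    intro X
    have hX := span_map X
    induction hX using Submodule.span_induction with
    | zero => simp
    | add x y _ _ hx hy =>
      simp only [LinearMap.add_comp, LinearMap.comp_add, Finset.sum_add_distrib] at hx hy ⊢
      rw [hx, hy]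
    | smul c x _ hx =>
      simp only [LinearMap.smul_comp, LinearMap.comp_smul, ← Finset.smul_sum] at hx ⊢
      rw [hx]
    | mem x hx =>
      obtain ⟨f, rfl⟩ := hx
      have e : (∑ σ, ρ σ ∘ₗ PiTensorProduct.map f ∘ₗ ρ σ⁻¹) =
          PiTensorProduct.map (fun i => ∑ σ : G i, R i σ ∘ₗ f i ∘ₗ R i σ⁻¹) := by
        have := (PiTensorProduct.mapMultilinear K (fun i => W i)
          (fun i => W i)).map_sum
          (fun i (σ : G i) => R i σ ∘ₗ f i ∘ₗ R i σ⁻¹)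
        refine Eq.trans ?_ this.symm
        refine Finset.sum_congr rfl fun σ _ => ?_
        show PiTensorProduct.map _ ∘ₗ PiTensorProduct.map f ∘ₗ PiTensorProduct.map _ =
          PiTensorProduct.map _
        rw [← PiTensorProduct.map_comp, ← PiTensorProduct.map_comp]
        rfl
      rw [e]
      exact commute_span T A hA Finset.univ _ (fun i _ => hR i (f i)) (by simp)
  have h1 : (∑ σ, ρ σ ∘ₗ S ∘ₗ ρ σ⁻¹) =
      (Fintype.card (∀ i, G i) : K) • S := by
    have : ∀ σ, ρ σ ∘ₗ S ∘ₗ ρ σ⁻¹ = S := by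
      intro σ
      rw [hS, ← LinearMap.comp_assoc]
      have : ρ σ ∘ₗ ρ σ⁻¹ = LinearMap.id := by
        have := (ρ.map_mul σ σ⁻¹).symm
        rw [mul_inv_cancel, ρ.map_one] at this
        exact this
      rw [this, LinearMap.id_comp]
    rw [Finset.sum_congr rfl fun σ _ => this σ]
    rw [Finset.sum_const, Finset.card_univ, Nat.cast_smul_eq_nsmul]
  have h2 := havg S
  rw [h1, LinearMap.smul_comp, LinearMap.comp_smul] at h2
  refine smul_right_injective _ ?_ h2
  exact_mod_cast Fintype.card_ne_zero

end MTI

/-- **First principal theorem for several vector spaces.**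
Over a field of characteristic zero, an endomorphism of
`V^α = V₁^{⊗α(1)} ⊗ ⋯ ⊗ Vₙ^{⊗α(n)}` invariant under `GL(V₁) × ⋯ × GL(Vₙ)`
is a linear combination of the operators `P_{σ₁} ⊗ ⋯ ⊗ P_{σₙ}`, where
`σᵢ ∈ 𝔖_{α(i)}` permutes the tensor factors of `Vᵢ^{⊗α(i)}`. -/
theorem multiTensor_invariant_mem_span_perm
    (K : Type*) [Field K] [CharZero K] (n : ℕ) (V : Fin n → Type*)
    [∀ i, AddCommGroup (V i)] [∀ i, Module K (V i)]
    [∀ i, FiniteDimensional K (V i)] [∀ i, Nontrivial (V i)]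
    (α : Fin n → ℕ)
    (T : (⨂[K] i, TensorPower K (α i) (V i)) →ₗ[K] ⨂[K] i, TensorPower K (α i) (V i))
    (hT : ∀ g : ∀ i, V i ≃ₗ[K] V i,
      (PiTensorProduct.map
        (fun i => PiTensorProduct.map (fun _ : Fin (α i) => (g i : V i →ₗ[K] V i)))).comp T
      = T.comp (PiTensorProduct.map
        (fun i => PiTensorProduct.map (fun _ : Fin (α i) => (g i : V i →ₗ[K] V i))))) :
    T ∈ Submodule.span K
      (Set.range fun σ : ∀ i, Equiv.Perm (Fin (α i)) =>
        (PiTensorProduct.map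
          (fun i => ((PiTensorProduct.reindex K (fun _ : Fin (α i) => V i) (σ i)).toLinearMap :
            TensorPower K (α i) (V i) →ₗ[K] TensorPower K (α i) (V i))) :
          (⨂[K] i, TensorPower K (α i) (V i)) →ₗ[K] ⨂[K] i, TensorPower K (α i) (V i))) := by
  haveI : ∀ i, FiniteDimensional K (TensorPower K (α i) (V i)) := fun i =>
    inferInstanceAs (FiniteDimensional K (⨂[K] _ : Fin (α i), V i))
  refine MTI.generic (W := fun i => TensorPower K (α i) (V i))
    (fun i => MTI.permOp K (V i) (α i)) T
    (fun i => Set.range fun g : V i ≃ₗ[K] V i =>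
      PiTensorProduct.map (fun _ : Fin (α i) => (g : V i →ₗ[K] V i)))
    (fun i x => MTI.avg_mem x) ?_
  intro f hf
  choose g hg using hf
  obtain rfl := funext hg
  exact hT g
end

section
/- Let $n \geq 1$ be an integer and let $\mathscr{T}$ be a finite non-empty family of linear forms on $\mathbb{R}^n$. Define $\Lambda \colon \mathbb{R}^n \to \mathbb{R}$ by $\Lambda(y) = \|y\|^{-1} \max_{l \in \mathscr{T}} l(y)$ for $y \neq 0$ and $\Lambda(0) = 0$, where $\|\cdot\|$ is the Euclidean norm. Suppose that $\Lambda$ takes at least one strictly negative value. Then $\Lambda$ attains its minimum value on $\mathbb{R}^n$, and any two points of $\mathbb{R}^n$ at which $\Lambda$ attains its minimum are proportional: if $\Lambda(y) = \Lambda(y') = \min \Lambda$, then $y' = t\, y$ for some real $t > 0$. -/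
/-- **Lemma 6.4, part 1) (Totaro, Ramanan–Ramanathan).**
Let `𝒯` be a finite nonempty family of linear forms on `ℝⁿ` and
`Λ(y) = ‖y‖⁻¹ max_{l ∈ 𝒯} l(y)` for `y ≠ 0`, `Λ(0) = 0`. If `Λ` takes a strictly
negative value, then `Λ` attains its minimum, and any two minimizers are
positively proportional. -/
theorem lambda_attains_min_and_minimizers_proportional
    (n : ℕ) (hn : 1 ≤ n)
    (𝒯 : Finset (EuclideanSpace ℝ (Fin n) →ₗ[ℝ] ℝ)) (h𝒯 : 𝒯.Nonempty)
    (Λ : EuclideanSpace ℝ (Fin n) → ℝ)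
    (hΛ : ∀ y : EuclideanSpace ℝ (Fin n), y ≠ 0 →
      Λ y = ‖y‖⁻¹ * 𝒯.sup' h𝒯 (fun l => l y))
    (hΛ0 : Λ 0 = 0)
    (hneg : ∃ y, Λ y < 0) :
    (∃ y₀, ∀ y, Λ y₀ ≤ Λ y) ∧
      ∀ y y' : EuclideanSpace ℝ (Fin n),
        (∀ z, Λ y ≤ Λ z) → (∀ z, Λ y' ≤ Λ z) → ∃ t : ℝ, 0 < t ∧ y' = t • y := by
  obtain ⟨y₁, hy₁⟩ := hneg
  set M : EuclideanSpace ℝ (Fin n) → ℝ := fun y => 𝒯.sup' h𝒯 (fun l => l y) with hM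
  have hcont : Continuous M := by
    apply Continuous.finset_sup'_apply
    intro l _
    exact LinearMap.continuous_of_finiteDimensional l
  have hsub : ∀ a b, M (a + b) ≤ M a + M b := by
    intro a b
    apply Finset.sup'_le
    intro l hl
    rw [map_add]
    exact add_le_add (Finset.le_sup' (fun l : EuclideanSpace ℝ (Fin n) →ₗ[ℝ] ℝ => l a) hl)
      (Finset.le_sup' (fun l : EuclideanSpace ℝ (Fin n) →ₗ[ℝ] ℝ => l b) hl)
  have hhom : ∀ (c : ℝ) a, 0 ≤ c → M (c • a) ≤ c * M a := by
    intro c a hc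
    apply Finset.sup'_le
    intro l hl
    rw [map_smul, smul_eq_mul]
    exact mul_le_mul_of_nonneg_left
      (Finset.le_sup' (fun l : EuclideanSpace ℝ (Fin n) →ₗ[ℝ] ℝ => l a) hl) hc
  have hne : ∀ y, Λ y < 0 → y ≠ 0 := by
    rintro y hy rfl
    exact absurd hΛ0 hy.ne
  have hMΛ : ∀ y, y ≠ 0 → M y = Λ y * ‖y‖ := by
    intro y hy
    have h : Λ y = ‖y‖⁻¹ * M y := hΛ y hy
    have : ‖y‖ ≠ 0 := norm_ne_zero_iff.mpr hy
    rw [h]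
    field_simp
  have hsph : ∀ y, y ≠ 0 → ‖y‖⁻¹ • y ∈ Metric.sphere (0 : EuclideanSpace ℝ (Fin n)) 1 := by
    intro y hy
    have : ‖y‖ ≠ 0 := norm_ne_zero_iff.mpr hy
    simp [norm_smul, this]
  constructor
  · obtain ⟨y₀, hy₀, hmin⟩ := (isCompact_sphere (0 : EuclideanSpace ℝ (Fin n)) 1).exists_isMinOn
      ⟨_, hsph y₁ (hne y₁ hy₁)⟩ hcont.continuousOn
    have hn0 : ‖y₀‖ = 1 := by simpa using hy₀
    have h0 : y₀ ≠ 0 := by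
      rintro rfl
      simp at hn0
    have key : ∀ y, y ≠ 0 → Λ y₀ ≤ Λ y := by
      intro y hy
      have h1 : M y₀ ≤ M (‖y‖⁻¹ • y) := hmin (hsph y hy)
      have h2 := hhom ‖y‖⁻¹ y (by positivity)
      have h3 : Λ y = ‖y‖⁻¹ * M y := hΛ y hy
      have h4 := hMΛ y₀ h0
      rw [hn0, mul_one] at h4
      linarith
    refine ⟨y₀, fun y => ?_⟩
    by_cases hy : y = 0
    · rw [hy, hΛ0]
      exact (key y₁ (hne y₁ hy₁)).trans hy₁.le
    · exact key y hy
  · intro y y' hy hy'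
    have hm : Λ y < 0 := (hy y₁).trans_lt hy₁
    have hm' : Λ y' = Λ y := le_antisymm (hy' y) (hy y')
    have h0 := hne y hm
    have h0' := hne y' (hm' ▸ hm)
    have e := hMΛ y h0
    have e' := hMΛ y' h0'
    rw [hm'] at e'
    have hs := hsub y y'
    have p : 0 < ‖y‖ := norm_pos_iff.mpr h0
    have p' : 0 < ‖y'‖ := norm_pos_iff.mpr h0'
    have hle : Λ y * ‖y + y'‖ ≤ Λ y * (‖y‖ + ‖y'‖) := by
      by_cases hz : y + y' = 0
      · exfalso
        rw [hz] at hs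
        have hM0 : M 0 = 0 := by simp [hM]
        nlinarith
      · have h5 := hMΛ _ hz
        have h6 := mul_le_mul_of_nonneg_right (hy (y + y')) (norm_nonneg (y + y'))
        linarith
    have hge : ‖y‖ + ‖y'‖ ≤ ‖y + y'‖ := (mul_le_mul_left_of_neg hm).mp hle
    have hr : SameRay ℝ y y' := sameRay_iff_norm_add.mpr (le_antisymm (norm_add_le _ _) hge)
    obtain ⟨r, hr0, hr1⟩ := hr.exists_pos_left h0 h0'
    exact ⟨r, hr0, hr1.symm⟩
end

section
/- Let $n \geq 1$ be an integer and let $\mathscr{T}$ be a finite non-empty family of linear forms on $\mathbb{R}^n$. Define $\Lambda \colon \mathbb{R}^n \to \mathbb{R}$ by $\Lambda(y) = \|y\|^{-1} \max_{l \in \mathscr{T}} l(y)$ for $y \neq 0$ and $\Lambda(0) = 0$, where $\|\cdot\|$ is the Euclidean norm. Suppose that $\Lambda$ takes at least one strictly negative value, let $c$ be the minimum value of $\Lambda$ and let $y_0 \in \mathbb{R}^n$ be a point at which $\Lambda$ attains this minimum. Then for every $y \in \mathbb{R}^n$ with $y \neq 0$, one has $\Lambda(y) \geq c\, \dfrac{\langle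 y_0, y \rangle}{\|y_0\| \cdot \|y\|}$, where $\langle \cdot, \cdot \rangle$ is the standard Euclidean inner product. -/
/-- **Lemma 6.4, part 2) (Totaro, Ramanan–Ramanathan).**
With `Λ(y) = ‖y‖⁻¹ max_{l ∈ 𝒯} l(y)` for `y ≠ 0`, `Λ(0) = 0`, taking a strictly
negative value, if `c` is the minimum value of `Λ`, attained at `y₀`, then for
every `y ≠ 0` one has `Λ(y) ≥ c ⟨y₀, y⟩ / (‖y₀‖ ‖y‖)`. -/
theorem lambda_ge_of_min
    (n : ℕ) (hn : 1 ≤ n)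
    (𝒯 : Finset (EuclideanSpace ℝ (Fin n) →ₗ[ℝ] ℝ)) (h𝒯 : 𝒯.Nonempty)
    (Λ : EuclideanSpace ℝ (Fin n) → ℝ)
    (hΛ : ∀ y : EuclideanSpace ℝ (Fin n), y ≠ 0 →
      Λ y = ‖y‖⁻¹ * 𝒯.sup' h𝒯 (fun l => l y))
    (hΛ0 : Λ 0 = 0)
    (hneg : ∃ y, Λ y < 0)
    (c : ℝ) (y₀ : EuclideanSpace ℝ (Fin n))
    (hmin : ∀ y, c ≤ Λ y) (hy₀ : Λ y₀ = c) :
    ∀ y : EuclideanSpace ℝ (Fin n), y ≠ 0 →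
      c * ((inner ℝ y₀ y : ℝ) / (‖y₀‖ * ‖y‖)) ≤ Λ y := by
  intro y hy
  have hc : c < 0 := by
    obtain ⟨z, hz⟩ := hneg
    exact lt_of_le_of_lt (hmin z) hz
  have hy0 : y₀ ≠ 0 := by
    rintro rfl
    rw [hΛ0] at hy₀
    linarith
  have hA : 0 < ‖y₀‖ := norm_pos_iff.mpr hy0
  have hB : 0 < ‖y‖ := norm_pos_iff.mpr hy
  obtain ⟨M, hM⟩ : ∃ M : EuclideanSpace ℝ (Fin n) → ℝ,
      M = fun y => 𝒯.sup' h𝒯 (fun l => l y) := ⟨_, rfl⟩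
  have hMl : ∀ l ∈ 𝒯, ∀ z, l z ≤ M z := by
    intro l hl z
    rw [hM]
    exact Finset.le_sup' (fun l : EuclideanSpace ℝ (Fin n) →ₗ[ℝ] ℝ => l z) hl
  have hΛM : ∀ z, z ≠ 0 → ‖z‖ * Λ z = M z := by
    intro z hz
    have : ‖z‖ ≠ 0 := norm_ne_zero_iff.mpr hz
    rw [hΛ z hz, hM, mul_inv_cancel_left₀ this]
  have hlow : ∀ z, c * ‖z‖ ≤ M z := by
    intro z
    by_cases hz : z = 0
    · subst hz
      obtain ⟨l, hl⟩ := h𝒯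
      have := hMl l hl 0
      simpa using this
    · rw [← hΛM z hz, mul_comm]
      exact mul_le_mul_of_nonneg_left (hmin z) (norm_nonneg z)
  have hM0 : M y₀ = ‖y₀‖ * c := by rw [← hΛM y₀ hy0, hy₀]
  have hsub : ∀ t : ℝ, 0 < t → M (y₀ + t • y) ≤ M y₀ + t * M y := by
    intro t ht
    have : 𝒯.sup' h𝒯 (fun l => l (y₀ + t • y)) ≤ M y₀ + t * M y := by
      apply Finset.sup'_le
      intro l hl
      rw [map_add, map_smul, smul_eq_mul]
      exact add_le_add (hMl l hl y₀) (mul_le_mul_of_nonneg_left (hMl l hl y) ht.le)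
    simpa only [hM] using this
  have key : c * inner ℝ y₀ y ≤ M y * ‖y₀‖ := by
    by_contra! hlt
    obtain ⟨t, htdef⟩ : ∃ t, t = (c * inner ℝ y₀ y - M y * ‖y₀‖) / (-c * ‖y‖ ^ 2) := ⟨_, rfl⟩
    have hden : 0 < -c * ‖y‖ ^ 2 := mul_pos (by linarith) (by positivity)
    have ht : 0 < t := htdef ▸ div_pos (by linarith) hden
    have hteq : t * (-c * ‖y‖ ^ 2) = c * inner ℝ y₀ y - M y * ‖y₀‖ := by
      rw [htdef, div_mul_cancel₀ _ hden.ne']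
    have h1 := (hlow (y₀ + t • y)).trans (hsub t ht)
    rw [hM0] at h1
    have h2 : ‖y₀ + t • y‖ ^ 2 = ‖y₀‖ ^ 2 + 2 * (t * inner ℝ y₀ y) + t ^ 2 * ‖y‖ ^ 2 := by
      rw [norm_add_sq_real, inner_smul_right, norm_smul, mul_pow, Real.norm_eq_abs, sq_abs]
    have h3 : 2 * (‖y₀‖ * ‖y₀ + t • y‖) ≤ 2 * ‖y₀‖ ^ 2 + 2 * (t * inner ℝ y₀ y) + t ^ 2 * ‖y‖ ^ 2 := by
      nlinarith [sq_nonneg (‖y₀‖ - ‖y₀ + t • y‖)]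
    have h4 := mul_le_mul_of_nonpos_left h3 hc.le
    have h5 := mul_le_mul_of_nonneg_left h1 hA.le
    have h6 : t * (2 * (c * inner ℝ y₀ y - M y * ‖y₀‖)) ≤ t * (t * (-c * ‖y‖ ^ 2)) := by
      linarith
    have h7 := le_of_mul_le_mul_left h6 ht
    linarith
  have : c * ((inner ℝ y₀ y : ℝ) / (‖y₀‖ * ‖y‖)) = (c * inner ℝ y₀ y) / (‖y₀‖ * ‖y‖) := by ring
  rw [this, div_le_iff₀ (by positivity)]
  have h8 := hΛM y hy
  rw [← h8] at key
  linarith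
end

section
/- Let $n \geq 1$ be an integer and let $\mathscr{T}$ be a finite non-empty family of linear forms on $\mathbb{R}^n$ all of whose coefficients are rational, i.e. each $l \in \mathscr{T}$ satisfies $l(e_i) \in \mathbb{Q}$ for every standard basis vector $e_i$. Define $\Lambda \colon \mathbb{R}^n \to \mathbb{R}$ by $\Lambda(y) = \|y\|^{-1} \max_{l \in \mathscr{T}} l(y)$ for $y \neq 0$ and $\Lambda(0) = 0$, where $\|\cdot\|$ is the Euclidean norm. Suppose that $\Lambda$ takes at least one strictly negative value. Then there exists a point $y_0 \in \mathbb{Z}^n$ (all coordinates integers) at which $\Lambda$ attains its minimum value over $\mathbb{R}^n$. -/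
theorem aux_retract : ∃ φ : ℝ →ₗ[ℚ] ℚ, φ 1 = 1 := by
  have h : LinearMap.ker (LinearMap.toSpanSingleton ℚ ℝ 1) = ⊥ := by
    rw [LinearMap.ker_eq_bot']
    intro m hm
    simpa [LinearMap.toSpanSingleton_apply, Algebra.smul_def] using hm
  obtain ⟨φ, hφ⟩ := LinearMap.exists_leftInverse_of_injective _ h
  refine ⟨φ, ?_⟩
  have := LinearMap.congr_fun hφ 1
  simpa [LinearMap.toSpanSingleton_apply] using this

theorem aux_mul (φ : ℝ →ₗ[ℚ] ℚ) (a : ℝ) (q : ℚ) : φ (a * q) = φ a * q := by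
  have : a * (q : ℝ) = q • a := by rw [Algebra.smul_def]; simp [mul_comm]
  rw [this, map_smul, smul_eq_mul, mul_comm]

theorem aux_rational (n : ℕ) (s : Finset (EuclideanSpace ℝ (Fin n)))
    (hs : ∀ x ∈ s, ∀ i, ∃ q : ℚ, x i = (q : ℝ))
    (p : EuclideanSpace ℝ (Fin n)) (hp : p ∈ convexHull ℝ (s : Set (EuclideanSpace ℝ (Fin n))))
    (hmin : ∀ x ∈ s, ‖p‖ ^ 2 ≤ inner ℝ x p) : ∀ i, ∃ q : ℚ, p i = (q : ℝ) := by
  obtain ⟨φ, hφ⟩ := aux_retract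
  rw [Finset.mem_convexHull'] at hp
  obtain ⟨w, hw0, hw1, hwp⟩ := hp
  have hsum : ∑ y ∈ s, w y * (inner ℝ y p - ‖p‖ ^ 2) = 0 := by
    simp only [mul_sub, Finset.sum_sub_distrib, ← Finset.sum_mul, hw1, one_mul]
    have : ∑ y ∈ s, w y * inner ℝ y p = inner ℝ (∑ y ∈ s, w y • y) p := by
      rw [sum_inner]; simp [inner_smul_left]
    rw [this, hwp, real_inner_self_eq_norm_sq, sub_self]
  have hz := (Finset.sum_eq_zero_iff_of_nonneg
    (fun y hy => mul_nonneg (hw0 y hy) (sub_nonneg.2 (hmin y hy)))).1 hsum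
  have hpi : ∀ i, p i = ∑ y ∈ s, w y * y i := by
    intro i
    rw [← hwp]; simp
  set p' : EuclideanSpace ℝ (Fin n) := WithLp.toLp 2 (fun i => (φ (p i) : ℝ)) with hp'
  have hp'i : ∀ i, p' i = (φ (p i) : ℝ) := fun i => rfl
  have hp's : p' = ∑ y ∈ s, (φ (w y) : ℝ) • y := by
    ext i
    rw [hp'i, hpi, map_sum]
    simp only [WithLp.ofLp_sum, WithLp.ofLp_smul, Finset.sum_apply, Pi.smul_apply, smul_eq_mul]
    push_cast
    refine Finset.sum_congr rfl fun y hy => ?_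
    obtain ⟨q, hq⟩ := hs y hy i
    rw [hq, aux_mul]; push_cast; rfl
  have hin : ∀ y ∈ s, inner ℝ y p' = (φ (inner ℝ y p) : ℝ) := by
    intro y hy
    simp only [PiLp.inner_apply, map_sum, Rat.cast_sum]
    refine Finset.sum_congr rfl fun i _ => ?_
    obtain ⟨q, hq⟩ := hs y hy i
    rw [hp'i, hq]
    simp [aux_mul]
  have hφ1 : ∑ y ∈ s, (φ (w y) : ℝ) = 1 := by
    rw [← Rat.cast_sum, ← map_sum, hw1, hφ]; simp
  have hd : p - p' = ∑ y ∈ s, (w y - (φ (w y) : ℝ)) • y := by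
    simp only [sub_smul, Finset.sum_sub_distrib]
    rw [hwp, ← hp's]
  have h0 : inner ℝ (p - p') (p - p') = (0 : ℝ) := by
    nth_rewrite 1 [hd]
    rw [sum_inner]
    have : ∀ y ∈ s, inner ℝ ((w y - (φ (w y) : ℝ)) • y) (p - p')
        = (w y - (φ (w y) : ℝ)) * (‖p‖ ^ 2 - (φ (‖p‖ ^ 2) : ℝ)) := by
      intro y hy
      rw [real_inner_smul_left]
      rcases mul_eq_zero.1 (hz y hy) with h | h
      · rw [h]; simp
      · rw [inner_sub_right, hin y hy, sub_eq_zero.1 h]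
    rw [Finset.sum_congr rfl this, ← Finset.sum_mul, Finset.sum_sub_distrib, hw1, hφ1]
    simp
  have h1 : p = p' := sub_eq_zero.1 (inner_self_eq_zero.1 h0)
  intro i
  exact ⟨φ (p i), by rw [← hp'i, ← h1]⟩

/-- **Lemma 6.4, part 3) (Totaro, Ramanan–Ramanathan).**
If all the linear forms in `𝒯` have rational coefficients and `Λ` takes a
strictly negative value, then there is a point with integer coordinates which
minimizes `Λ` over `ℝⁿ`. -/
theorem lambda_min_attained_at_integer_point
    (n : ℕ) (hn : 1 ≤ n)
    (𝒯 : Finset (EuclideanSpace ℝ (Fin n) →ₗ[ℝ] ℝ)) (h𝒯 : 𝒯.Nonempty)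
    (hrat : ∀ l ∈ 𝒯, ∀ i : Fin n, ∃ q : ℚ, l (EuclideanSpace.single i (1 : ℝ)) = (q : ℝ))
    (Λ : EuclideanSpace ℝ (Fin n) → ℝ)
    (hΛ : ∀ y : EuclideanSpace ℝ (Fin n), y ≠ 0 →
      Λ y = ‖y‖⁻¹ * 𝒯.sup' h𝒯 (fun l => l y))
    (hΛ0 : Λ 0 = 0)
    (hneg : ∃ y, Λ y < 0) :
    ∃ y₀ : EuclideanSpace ℝ (Fin n),
      (∀ i : Fin n, ∃ m : ℤ, y₀ i = (m : ℝ)) ∧ ∀ y, Λ y₀ ≤ Λ y := by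
  classical
  let v : (EuclideanSpace ℝ (Fin n) →ₗ[ℝ] ℝ) → EuclideanSpace ℝ (Fin n) :=
    fun l => WithLp.toLp 2 (fun i => l (EuclideanSpace.single i (1 : ℝ)))
  have hv : ∀ l y, l y = inner ℝ (v l) y := by
    intro l y
    have hy : y = ∑ i, y i • EuclideanSpace.single i (1 : ℝ) := by
      ext j
      simp [Finset.sum_apply, Pi.single_apply]
    conv_lhs => rw [hy]
    simp [v, PiLp.inner_apply]
  let s := 𝒯.image v
  let K := convexHull ℝ (s : Set (EuclideanSpace ℝ (Fin n)))
  have hKc : IsCompact K := s.finite_toSet.isCompact_convexHull ℝ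
  have hKne : K.Nonempty := by
    obtain ⟨l, hl⟩ := h𝒯
    exact ⟨v l, subset_convexHull _ _ (by simpa [s] using ⟨l, hl, rfl⟩)⟩
  obtain ⟨p, hpK, hpm⟩ := exists_norm_eq_iInf_of_complete_convex hKne hKc.isComplete
    (convex_convexHull ℝ _) 0
  rw [norm_eq_iInf_iff_real_inner_le_zero (convex_convexHull ℝ _) hpK] at hpm
  have hmin : ∀ x ∈ s, ‖p‖ ^ 2 ≤ inner ℝ x p := by
    intro x hx
    have := hpm x (subset_convexHull _ _ hx)
    rw [zero_sub, inner_neg_left, inner_sub_right, real_inner_self_eq_norm_sq,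
      real_inner_comm] at this
    linarith
  have hprat := aux_rational n s (by
    intro x hx i
    obtain ⟨l, hl, rfl⟩ := Finset.mem_image.1 hx
    exact hrat l hl i) p hpK hmin
  -- lower bound
  have hlow : ∀ y, inner ℝ p y ≤ 𝒯.sup' h𝒯 (fun l => l y) := by
    intro y
    have hp := hpK
    rw [Finset.mem_convexHull'] at hp
    obtain ⟨w, hw0, hw1, hwp⟩ := hp
    rw [← hwp, sum_inner]
    calc _ ≤ ∑ x ∈ s, w x * 𝒯.sup' h𝒯 (fun l => l y) := by
            refine Finset.sum_le_sum fun x hx => ?_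
            rw [real_inner_smul_left]
            refine mul_le_mul_of_nonneg_left ?_ (hw0 x hx)
            obtain ⟨l, hl, rfl⟩ := Finset.mem_image.1 hx
            rw [← hv]
            exact Finset.le_sup' (fun l => l y) hl
      _ = _ := by rw [← Finset.sum_mul, hw1, one_mul]
  have hp0 : p ≠ 0 := by
    rintro rfl
    obtain ⟨y, hy⟩ := hneg
    have hy0 : y ≠ 0 := by rintro rfl; linarith
    rw [hΛ y hy0] at hy
    have := hlow y
    rw [inner_zero_left] at this
    have := mul_nonneg (inv_nonneg.2 (norm_nonneg y)) this
    linarith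
  choose q hq using hprat
  let N : ℕ := ∏ i, (q i).den
  have hN : 0 < N := Finset.prod_pos fun i _ => (q i).den_pos
  have hNR : (0 : ℝ) < N := by exact_mod_cast hN
  have hpn : 0 < ‖p‖ := norm_pos_iff.2 hp0
  refine ⟨-((N : ℝ) • p), ?_, ?_⟩
  · intro i
    obtain ⟨k, hk⟩ : (q i).den ∣ N := Finset.dvd_prod_of_mem _ (Finset.mem_univ i)
    refine ⟨-(k * (q i).num), ?_⟩
    have h := Rat.mul_den_eq_num (q i)
    have h' : (q i : ℝ) * ((q i).den : ℝ) = ((q i).num : ℝ) := by exact_mod_cast h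
    simp only [PiLp.neg_apply, PiLp.smul_apply, smul_eq_mul, hq, hk]
    push_cast
    rw [← h']; ring
  · have hup : Λ (-((N : ℝ) • p)) ≤ -‖p‖ := by
      rw [hΛ _ (neg_ne_zero.2 (smul_ne_zero hNR.ne' hp0)), norm_neg, norm_smul,
        Real.norm_of_nonneg hNR.le, inv_mul_le_iff₀ (mul_pos hNR hpn)]
      refine Finset.sup'_le _ _ fun l hl => ?_
      rw [hv, inner_neg_right, real_inner_smul_right]
      have := hmin (v l) (Finset.mem_image_of_mem _ hl)
      nlinarith
    intro y
    refine hup.trans ?_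
    by_cases hy : y = 0
    · rw [hy, hΛ0]; linarith
    · have hyn : 0 < ‖y‖ := norm_pos_iff.2 hy
      rw [hΛ y hy, le_inv_mul_iff₀ hyn]
      have h1 := hlow y
      have h2 := neg_le_of_abs_le (abs_real_inner_le_norm p y)
      linarith [mul_comm ‖p‖ ‖y‖]
end

section
/- Let $K$ be a field, $V$ a nonzero finite-dimensional $K$-vector space of dimension $r$, $\mathbf{e} = (e_1, \ldots, e_r)$ a basis of $V$, and $Z$ a non-empty subset of $\mathbb{R}$. Then the map $\Phi_{\mathbf{e}}$ sending an $\mathbb{R}$-filtration $\mathcal{F}$ to the tuple $(\lambda_{\mathcal{F}}(e_1), \ldots, \lambda_{\mathcal{F}}(e_r))$ is a bijection from the set of $\mathbb{R}$-filtrations of $V$ that are compatible with $\mathbf{e}$ and supported by $Z$ onto $Z^r$. In other words: two $\mathbb{R}$-filtrations compatible with $\mathbf{e}$ and supported by $Z$ that assign the same values $\lambda_{\mathcal{F}}(e_i)$ to all basis vectors are equal, and for every tuple $(z_1, \ldots, z_r) \in Z^r$ there exists an $\mathbb{R}$-filtration of $V$ compatible with $\mathbf{e}$, supported by $Z$, with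 $\lambda_{\mathcal{F}}(e_i) = z_i$ for all $i$. -/
/-- An `ℝ`-filtration of a `K`-vector space `V`: a decreasing, left-continuous family of
subspaces which is `0` for sufficiently large indices and `V` for sufficiently small ones. -/
structure RFiltration (K V : Type*) [Field K] [AddCommGroup V] [Module K V] where
  /-- the family of subspaces -/
  F : ℝ → Submodule K V
  antitone : Antitone F
  eventually_bot : ∃ a : ℝ, ∀ b : ℝ, a ≤ b → F b = ⊥
  eventually_top : ∃ a : ℝ, ∀ b : ℝ, b ≤ a → F b = ⊤
  left_continuous : ∀ a : ℝ, F a = ⨅ b : {b : ℝ // b < a}, F (b : ℝ)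

namespace RFiltration

variable {K V : Type*} [Field K] [AddCommGroup V] [Module K V]

/-- `λ_𝓕(x) = sup { a | x ∈ 𝓕_a V }` (a real number; meaningful for `x ≠ 0`). -/
noncomputable def lambda (𝓕 : RFiltration K V) (x : V) : ℝ :=
  sSup {a : ℝ | x ∈ 𝓕.F a}

/-- A family of vectors `e` is compatible with the filtration `𝓕` if each subspace `𝓕_a V`
is spanned by the vectors of the family it contains. -/
def Compatible {ι : Type*} (𝓕 : RFiltration K V) (e : ι → V) : Prop :=
  ∀ a : ℝ, 𝓕.F a = Submodule.span K (Set.range e ∩ (𝓕.F a : Set V))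

/-- The filtration `𝓕` is supported by `Z ⊆ ℝ` if all its jump values lie in `Z`,
i.e. `λ_𝓕(x) ∈ Z` for every nonzero `x`. -/
def SupportedBy (𝓕 : RFiltration K V) (Z : Set ℝ) : Prop :=
  ∀ x : V, x ≠ 0 → 𝓕.lambda x ∈ Z

end RFiltration

theorem RFiltration.mem_iff_aux {K V : Type*} [Field K] [AddCommGroup V] [Module K V]
    (𝓕 : RFiltration K V) {x : V} (hx : x ≠ 0) (a : ℝ) : x ∈ 𝓕.F a ↔ a ≤ 𝓕.lambda x := by
  obtain ⟨t, ht⟩ := 𝓕.eventually_bot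
  obtain ⟨s, hs⟩ := 𝓕.eventually_top
  have hbdd : BddAbove {a : ℝ | x ∈ 𝓕.F a} := by
    refine ⟨t, fun b hb => ?_⟩
    by_contra h
    have h1 : x ∈ 𝓕.F b := hb
    rw [ht b (not_le.1 h).le] at h1
    exact hx (by simpa using h1)
  have hne : {a : ℝ | x ∈ 𝓕.F a}.Nonempty := ⟨s, by simp [hs s le_rfl]⟩
  constructor
  · intro h
    exact le_csSup hbdd h
  · intro h
    rw [𝓕.left_continuous a, Submodule.mem_iInf]
    rintro ⟨b, hb⟩
    obtain ⟨c, hc, hbc⟩ := exists_lt_of_lt_csSup hne (lt_of_lt_of_le hb h)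
    exact 𝓕.antitone hbc.le hc

/-- The filtration attached to a basis and a tuple. -/
noncomputable def RFiltration.ofTuple {K V : Type*} [Field K] [AddCommGroup V] [Module K V]
    {r : ℕ} (e : Module.Basis (Fin r) K V) (z : Fin r → ℝ) : RFiltration K V where
  F a :=
    { carrier := {x | ∀ i, e.repr x i ≠ 0 → a ≤ z i}
      zero_mem' := by intro i h; simp at h
      add_mem' := by
        intro x y hx hy i h
        by_cases h1 : e.repr x i = 0
        · apply hy i
          intro h2
          apply h
          simp [h1, h2]
        · exact hx i h1
      smul_mem' := by
        intro c x hx i h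
        apply hx i
        intro h1
        apply h
        simp [h1] }
  antitone := fun a b hab x hx i h => hab.trans (hx i h)
  eventually_bot := by
    obtain ⟨M, hM⟩ := (Set.finite_range z).bddAbove
    refine ⟨M + 1, fun b hb => ?_⟩
    rw [eq_bot_iff]
    intro x hx
    rw [Submodule.mem_bot]
    apply e.repr.injective
    ext i
    by_contra h
    have h1 : b ≤ z i := hx i (by simpa using h)
    have h2 : z i ≤ M := hM ⟨i, rfl⟩
    linarith
  eventually_top := by
    obtain ⟨M, hM⟩ := (Set.finite_range z).bddBelow
    refine ⟨M, fun b hb => ?_⟩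
    rw [eq_top_iff]
    intro x _ i _
    exact hb.trans (hM ⟨i, rfl⟩)
  left_continuous := by
    intro a
    ext x
    rw [Submodule.mem_iInf]
    constructor
    · rintro hx ⟨b, hb⟩ i h
      exact hb.le.trans (hx i h)
    · intro hx i h
      exact le_of_forall_lt_imp_le_of_dense fun b hb => hx ⟨b, hb⟩ i h

theorem RFiltration.mem_ofTuple {K V : Type*} [Field K] [AddCommGroup V] [Module K V]
    {r : ℕ} (e : Module.Basis (Fin r) K V) (z : Fin r → ℝ) (a : ℝ) (x : V) :
    x ∈ (RFiltration.ofTuple e z).F a ↔ ∀ i, e.repr x i ≠ 0 → a ≤ z i := Iff.rfl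

theorem RFiltration.mem_ofTuple_basis {K V : Type*} [Field K] [AddCommGroup V] [Module K V]
    {r : ℕ} (e : Module.Basis (Fin r) K V) (z : Fin r → ℝ) (a : ℝ) (i : Fin r) :
    e i ∈ (RFiltration.ofTuple e z).F a ↔ a ≤ z i := by
  rw [RFiltration.mem_ofTuple]
  constructor
  · intro h
    exact h i (by simp)
  · intro h j hj
    rw [e.repr_self, Finsupp.single_apply] at hj
    by_cases hij : i = j
    · exact hij ▸ h
    · simp [hij] at hj

/-- **Proposition 5.1.** For a basis `e` of `V` and a nonempty `Z ⊆ ℝ`, the map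
`𝓕 ↦ (λ_𝓕(e₁), …, λ_𝓕(e_r))` is a bijection from the set of `ℝ`-filtrations of `V`
compatible with `e` and supported by `Z` onto `Z^r`. -/
theorem RFiltration.bijection_onto_Zr
    (K V : Type*) [Field K] [AddCommGroup V] [Module K V] [FiniteDimensional K V]
    [Nontrivial V] (r : ℕ) (e : Module.Basis (Fin r) K V) (Z : Set ℝ) (hZ : Z.Nonempty) :
    (∀ 𝓕 𝓖 : RFiltration K V, 𝓕.Compatible e → 𝓖.Compatible e →
      𝓕.SupportedBy Z → 𝓖.SupportedBy Z →
      (∀ i : Fin r, 𝓕.lambda (e i) = 𝓖.lambda (e i)) → 𝓕 = 𝓖) ∧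
    (∀ z : Fin r → ℝ, (∀ i, z i ∈ Z) →
      ∃ 𝓕 : RFiltration K V, 𝓕.Compatible e ∧ 𝓕.SupportedBy Z ∧
        ∀ i : Fin r, 𝓕.lambda (e i) = z i) := by
  constructor
  · intro 𝓕 𝓖 hF hG _ _ h
    have key : 𝓕.F = 𝓖.F := by
      funext a
      rw [hF a, hG a]
      congr 1
      ext x
      constructor
      · rintro ⟨⟨i, rfl⟩, hx⟩
        refine ⟨⟨i, rfl⟩, ?_⟩
        have h1 := (𝓕.mem_iff_aux (e.ne_zero i) a).1 hx
        exact (𝓖.mem_iff_aux (e.ne_zero i) a).2 (h i ▸ h1)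
      · rintro ⟨⟨i, rfl⟩, hx⟩
        refine ⟨⟨i, rfl⟩, ?_⟩
        have h1 := (𝓖.mem_iff_aux (e.ne_zero i) a).1 hx
        exact (𝓕.mem_iff_aux (e.ne_zero i) a).2 ((h i).symm ▸ h1)
    cases 𝓕
    cases 𝓖
    cases key
    rfl
  · intro z hz
    refine ⟨RFiltration.ofTuple e z, ?_, ?_, ?_⟩
    · intro a
      apply le_antisymm
      · intro x hx
        rw [← e.sum_repr x]
        refine Submodule.sum_mem _ fun i _ => ?_
        by_cases h : e.repr x i = 0
        · simp [h]
        · refine Submodule.smul_mem _ _ (Submodule.subset_span ⟨⟨i, rfl⟩, ?_⟩)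
          exact (RFiltration.mem_ofTuple_basis e z a i).2 (hx i h)
      · exact Submodule.span_le.2 Set.inter_subset_right
    · intro x hx
      have hne : (e.repr x).support.Nonempty := by
        rw [Finsupp.support_nonempty_iff]
        simpa using hx
      obtain ⟨i, hi, hmin⟩ := Finset.exists_min_image (e.repr x).support z hne
      have : (RFiltration.ofTuple e z).lambda x = z i := by
        apply eq_of_forall_le_iff
        intro c
        rw [← RFiltration.mem_iff_aux _ hx, RFiltration.mem_ofTuple]
        constructor
        · intro h
          exact h i (Finsupp.mem_support_iff.1 hi)
        · intro h j hj
          exact h.trans (hmin j (Finsupp.mem_support_iff.2 hj))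
      rw [this]
      exact hz i
    · intro i
      apply eq_of_forall_le_iff
      intro c
      rw [← RFiltration.mem_iff_aux _ (e.ne_zero i), RFiltration.mem_ofTuple_basis]
end

section
/- Let $K$ be a field and $V$ a nonzero finite-dimensional $K$-vector space of dimension $r$. Let $\mathcal{F}$ and $\mathcal{G}$ be two $\mathbb{R}$-filtrations of $V$, and let $\mathbf{e} = (e_1, \ldots, e_r)$ and $\mathbf{e}' = (e'_1, \ldots, e'_r)$ be two bases of $V$, each of which is compatible with both $\mathcal{F}$ and $\mathcal{G}$. Then $\sum_{i=1}^r \lambda_{\mathcal{F}}(e_i)\, \lambda_{\mathcal{G}}(e_i) = \sum_{i=1}^r \lambda_{\mathcal{F}}(e'_i)\, \lambda_{\mathcal{G}}(e'_i)$; that is, the scalar product $\langle \mathcal{F}, \mathcal{G} \rangle = \frac{1}{r} \sum_{i=1}^r \lambda_{\mathcal{F}}(e_i) \lambda_{\mathcal{G}}(e_i)$ does not depend on the choice of the common compatible basis. -/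
theorem RFiltration.multiset_eq_aux {α : Type*} [PartialOrder α] [DecidableEq α]
    [DecidableLE α] : ∀ (n : ℕ) (s t : Multiset α), s.card = n →
    (∀ a, s.countP (fun x => a ≤ x) = t.countP (fun x => a ≤ x)) → s = t := by
  intro n
  induction n with
  | zero =>
    intro s t hs h
    rw [Multiset.card_eq_zero] at hs
    subst hs
    symm
    rw [Multiset.eq_zero_iff_forall_notMem]
    intro a ha
    have h1 : 0 < t.countP (fun x => a ≤ x) := Multiset.countP_pos.2 ⟨a, ha, le_rfl⟩
    rw [← h a] at h1
    simp at h1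
  | succ n ih =>
    intro s t hs h
    have hne : s.toFinset.Nonempty := by
      rw [Multiset.toFinset_nonempty]
      rintro rfl
      simp at hs
    obtain ⟨p, hp⟩ := s.toFinset.exists_maximal hne
    have hps : p ∈ s := by simpa using hp.1
    have h1 : 0 < s.countP (fun x => p ≤ x) := Multiset.countP_pos.2 ⟨p, hps, le_rfl⟩
    rw [h p] at h1
    obtain ⟨q, hq, hpq⟩ := Multiset.countP_pos.1 h1
    have h2 : 0 < t.countP (fun x => q ≤ x) := Multiset.countP_pos.2 ⟨q, hq, le_rfl⟩
    rw [← h q] at h2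
    obtain ⟨p', hp', hqp⟩ := Multiset.countP_pos.1 h2
    have h3 : p' ≤ p := hp.2 (by simpa using hp') (hpq.trans hqp)
    have h4 : q = p := le_antisymm (hqp.trans h3) hpq
    subst h4
    obtain ⟨s, rfl⟩ := Multiset.exists_cons_of_mem hps
    obtain ⟨t, rfl⟩ := Multiset.exists_cons_of_mem hq
    rw [ih s t (by simpa using hs)]
    intro a
    have := h a
    simpa [Multiset.countP_cons] using this

theorem RFiltration.le_lambda_iff {K V : Type*} [Field K] [AddCommGroup V] [Module K V]
    (𝓕 : RFiltration K V) (x : V) (hx : x ≠ 0) (a : ℝ) :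
    a ≤ 𝓕.lambda x ↔ x ∈ 𝓕.F a := by
  obtain ⟨u, hu⟩ := 𝓕.eventually_bot
  obtain ⟨l, hl⟩ := 𝓕.eventually_top
  have hne : {a : ℝ | x ∈ 𝓕.F a}.Nonempty := ⟨l, by simp [hl l le_rfl]⟩
  have hbdd : BddAbove {a : ℝ | x ∈ 𝓕.F a} := by
    refine ⟨u, fun b hb => ?_⟩
    by_contra hc
    have hb' : x ∈ 𝓕.F b := hb
    rw [hu b (not_le.1 hc).le] at hb'
    exact hx (by simpa using hb')
  constructor
  · intro h
    rw [𝓕.left_continuous a, Submodule.mem_iInf]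
    rintro ⟨b, hb⟩
    obtain ⟨c, hc, hbc⟩ := exists_lt_of_lt_csSup hne (lt_of_lt_of_le hb h)
    exact 𝓕.antitone hbc.le hc
  · intro h
    exact le_csSup hbdd h

open Classical in
theorem RFiltration.count_eq {K V : Type*} [Field K] [AddCommGroup V] [Module K V]
    (r : ℕ) (𝓕 𝓖 : RFiltration K V)
    (e : Module.Basis (Fin r) K V)
    (heF : 𝓕.Compatible e) (heG : 𝓖.Compatible e) (p : ℝ × ℝ) :
    ((Finset.univ : Finset (Fin r)).val.map
      (fun i => (𝓕.lambda (e i), 𝓖.lambda (e i)))).countP (fun x => p ≤ x)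
      = Module.finrank K (𝓕.F p.1 ⊓ 𝓖.F p.2 : Submodule K V) := by
  have key : ∀ W : Submodule K V, W = Submodule.span K (Set.range e ∩ (W : Set V)) →
      ∀ x, x ∈ W ↔ ∀ i, e.repr x i ≠ 0 → e i ∈ W := by
    intro W hW x
    have h1 : Set.range e ∩ (W : Set V) = e '' {i | e i ∈ W} := by
      ext y
      constructor
      · rintro ⟨⟨i, rfl⟩, hi⟩
        exact ⟨i, hi, rfl⟩
      · rintro ⟨i, hi, rfl⟩
        exact ⟨⟨i, rfl⟩, hi⟩
    conv_lhs => rw [hW, h1, Module.Basis.mem_span_image]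
    simp [Set.subset_def]
  have hspan : (𝓕.F p.1 ⊓ 𝓖.F p.2 : Submodule K V)
      = Submodule.span K (Set.range (fun i : {i // e i ∈ 𝓕.F p.1 ∧ e i ∈ 𝓖.F p.2} => e i)) := by
    have h1 : Set.range (fun i : {i // e i ∈ 𝓕.F p.1 ∧ e i ∈ 𝓖.F p.2} => e i)
        = e '' {i | e i ∈ 𝓕.F p.1 ∧ e i ∈ 𝓖.F p.2} := by
      ext y
      simp
    ext x
    rw [h1, Module.Basis.mem_span_image, Submodule.mem_inf, key _ (heF p.1), key _ (heG p.2)]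
    simp only [Set.subset_def, Finset.mem_coe, Finsupp.mem_support_iff, Set.mem_ofPred_eq]
    exact ⟨fun h i hi => ⟨h.1 i hi, h.2 i hi⟩, fun h => ⟨fun i hi => (h i hi).1, fun i hi => (h i hi).2⟩⟩
  have hli : LinearIndependent K
      (fun i : {i // e i ∈ 𝓕.F p.1 ∧ e i ∈ 𝓖.F p.2} => e i) :=
    e.linearIndependent.comp _ Subtype.val_injective
  rw [hspan, finrank_span_eq_card hli,
    Fintype.card_subtype, Multiset.countP_map, Finset.card_def, Finset.filter_val]
  congr 1
  apply Multiset.filter_congr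
  intro i _
  rw [Prod.le_def, le_lambda_iff _ _ (e.ne_zero i), le_lambda_iff _ _ (e.ne_zero i)]

/-- **Well-definedness of the scalar product of filtrations (Section 5.4).**
If `e` and `e'` are two bases of `V`, each compatible with both `ℝ`-filtrations
`𝓕` and `𝓖`, then `∑ᵢ λ_𝓕(eᵢ) λ_𝓖(eᵢ) = ∑ᵢ λ_𝓕(e'ᵢ) λ_𝓖(e'ᵢ)`. -/
theorem RFiltration.scalar_product_well_defined
    (K V : Type*) [Field K] [AddCommGroup V] [Module K V] [FiniteDimensional K V]
    [Nontrivial V] (r : ℕ) (𝓕 𝓖 : RFiltration K V)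
    (e e' : Module.Basis (Fin r) K V)
    (heF : 𝓕.Compatible e) (heG : 𝓖.Compatible e)
    (he'F : 𝓕.Compatible e') (he'G : 𝓖.Compatible e') :
    ∑ i : Fin r, 𝓕.lambda (e i) * 𝓖.lambda (e i)
      = ∑ i : Fin r, 𝓕.lambda (e' i) * 𝓖.lambda (e' i) := by
  classical
  have h := RFiltration.multiset_eq_aux _ _ _ rfl (fun p =>
    (RFiltration.count_eq r 𝓕 𝓖 e heF heG p).trans
      (RFiltration.count_eq r 𝓕 𝓖 e' he'F he'G p).symm)
  have h2 := congrArg (fun m => (Multiset.map (fun q : ℝ × ℝ => q.1 * q.2) m).sum) h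
  simpa only [Multiset.map_map, Function.comp_def, Finset.sum_eq_multiset_sum] using h2
end

section
/- Let $K$ be a field, and let $V$ and $W$ be nonzero finite-dimensional $K$-vector spaces with $\mathbb{R}$-filtrations $\mathcal{F}$ and $\mathcal{G}$ respectively. Let $(e_1, \ldots, e_r)$ be a basis of $V$ compatible with $\mathcal{F}$ and $(f_1, \ldots, f_s)$ a basis of $W$ compatible with $\mathcal{G}$. Define the tensor product filtration $\mathcal{H}$ of $V \otimes_K W$ by $\mathcal{H}_\lambda (V \otimes W) = \sum_{\lambda_1 + \lambda_2 \geq \lambda} (\mathcal{F}_{\lambda_1} V) \otimes (\mathcal{G}_{\lambda_2} W)$, where $(\mathcal{F}_{\lambda_1} V) \otimes (\mathcal{G}_{\lambda_2} W)$ denotes the image of $\mathcal{F}_{\lambda_1} V \otimes_K \mathcal{G}_{\lambda_2} W$ in $V \otimes_K W$. Then for every $\lambda \in \mathbb{R}$, the subspace $\mathcal{H}_\lambda(V \otimes W)$ is the linear span of the set $\{ e_i \otimes f_j : \lambda_{\mathcal{F}}(e_i) + \lambda_{\mathcal{G}}(f_j) \geq \lambda \}$; in particular the basis $(e_i \otimes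 f_j)_{i,j}$ of $V \otimes_K W$ is compatible with $\mathcal{H}$, and $\lambda_{\mathcal{H}}(e_i \otimes f_j) = \lambda_{\mathcal{F}}(e_i) + \lambda_{\mathcal{G}}(f_j)$. -/
open scoped TensorProduct

theorem RFiltration.mem_iff_le_lambda {K V : Type*} [Field K] [AddCommGroup V] [Module K V]
    (F : RFiltration K V) {x : V} (hx : x ≠ 0) (a : ℝ) : x ∈ F.F a ↔ a ≤ F.lambda x := by
  have hne : {a : ℝ | x ∈ F.F a}.Nonempty := by
    obtain ⟨a, ha⟩ := F.eventually_top
    exact ⟨a, by simp [ha a le_rfl]⟩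
  have hbdd : BddAbove {a : ℝ | x ∈ F.F a} := by
    obtain ⟨c, hc⟩ := F.eventually_bot
    refine ⟨c, fun b hb => ?_⟩
    by_contra! h
    have hb' : x ∈ F.F b := hb
    rw [hc b h.le] at hb'
    exact hx ((Submodule.mem_bot K).1 hb')
  constructor
  · intro h
    exact le_csSup hbdd h
  · intro h
    rw [F.left_continuous a, Submodule.mem_iInf]
    rintro ⟨b, hb⟩
    obtain ⟨c, hc, hbc⟩ := exists_lt_of_lt_csSup hne (lt_of_lt_of_le hb h)
    exact F.antitone hbc.le hc

/-- **Compatibility of tensor-product bases with the tensor product filtration (Section 5.3).**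
If `e` is a basis of `V` compatible with `𝓕` and `f` a basis of `W` compatible with `𝓖`,
and `ℋ_a = ∑_{a₁+a₂ ≥ a} 𝓕_{a₁}V ⊗ 𝓖_{a₂}W` is the tensor product filtration of `V ⊗ W`,
then each `ℋ_a` is spanned by `{eᵢ ⊗ fⱼ : λ_𝓕(eᵢ) + λ_𝓖(fⱼ) ≥ a}`; in particular the basis
`(eᵢ ⊗ fⱼ)` is compatible with `ℋ` and `λ_ℋ(eᵢ ⊗ fⱼ) = λ_𝓕(eᵢ) + λ_𝓖(fⱼ)`. -/
theorem RFiltration.tensor_basis_compatible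
    (K V W : Type*) [Field K]
    [AddCommGroup V] [Module K V] [FiniteDimensional K V] [Nontrivial V]
    [AddCommGroup W] [Module K W] [FiniteDimensional K W] [Nontrivial W]
    (𝓕 : RFiltration K V) (𝓖 : RFiltration K W) (r s : ℕ)
    (e : Module.Basis (Fin r) K V) (f : Module.Basis (Fin s) K W)
    (he : 𝓕.Compatible e) (hf : 𝓖.Compatible f)
    (ℋ : ℝ → Submodule K (V ⊗[K] W))
    (hℋ : ∀ a : ℝ, ℋ a = ⨆ p : ℝ × ℝ, ⨆ _ : a ≤ p.1 + p.2,
      LinearMap.range (TensorProduct.map (𝓕.F p.1).subtype (𝓖.F p.2).subtype)) :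
    (∀ a : ℝ, ℋ a = Submodule.span K
        {x : V ⊗[K] W | ∃ i : Fin r, ∃ j : Fin s,
          a ≤ 𝓕.lambda (e i) + 𝓖.lambda (f j) ∧ x = e i ⊗ₜ[K] f j}) ∧
    (∀ (i : Fin r) (j : Fin s),
      sSup {a : ℝ | e i ⊗ₜ[K] f j ∈ ℋ a} = 𝓕.lambda (e i) + 𝓖.lambda (f j)) := by
  have key : ∀ a : ℝ, ℋ a = Submodule.span K
        {x : V ⊗[K] W | ∃ i : Fin r, ∃ j : Fin s,
          a ≤ 𝓕.lambda (e i) + 𝓖.lambda (f j) ∧ x = e i ⊗ₜ[K] f j} := by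
    intro a
    rw [hℋ a]
    apply le_antisymm
    · refine iSup₂_le fun p hp => ?_
      rw [TensorProduct.range_map, Submodule.range_subtype, Submodule.range_subtype,
        he p.1, hf p.2, Submodule.map₂_span_span]
      apply Submodule.span_mono
      rintro _ ⟨_, ⟨⟨i, rfl⟩, hi⟩, _, ⟨⟨j, rfl⟩, hj⟩, rfl⟩
      refine ⟨i, j, ?_, rfl⟩
      have h1 := (𝓕.mem_iff_le_lambda (e.ne_zero i) _).1 hi
      have h2 := (𝓖.mem_iff_le_lambda (f.ne_zero j) _).1 hj
      linarith
    · rw [Submodule.span_le]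
      rintro _ ⟨i, j, hij, rfl⟩
      refine Submodule.mem_iSup_of_mem (𝓕.lambda (e i), 𝓖.lambda (f j))
        (Submodule.mem_iSup_of_mem hij ?_)
      exact ⟨⟨e i, (𝓕.mem_iff_le_lambda (e.ne_zero i) _).2 le_rfl⟩ ⊗ₜ
        ⟨f j, (𝓖.mem_iff_le_lambda (f.ne_zero j) _).2 le_rfl⟩, by simp⟩
  refine ⟨key, fun i j => ?_⟩
  have hset : {a : ℝ | e i ⊗ₜ[K] f j ∈ ℋ a} = Set.Iic (𝓕.lambda (e i) + 𝓖.lambda (f j)) := by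
    ext a
    rw [Set.mem_setOf_eq, Set.mem_Iic, key a]
    constructor
    · intro h
      by_contra hn
      have hli := (e.tensorProduct f).linearIndependent
      refine hli.notMem_span_image
        (s := {q : Fin r × Fin s | a ≤ 𝓕.lambda (e q.1) + 𝓖.lambda (f q.2)}) (x := (i, j)) hn ?_
      rw [Module.Basis.tensorProduct_apply]
      refine Submodule.span_mono ?_ h
      rintro _ ⟨i', j', hij, rfl⟩
      exact ⟨(i', j'), hij, by simp [Module.Basis.tensorProduct_apply]⟩
    · intro h
      exact Submodule.subset_span ⟨i, j, h, rfl⟩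
  rw [hset, csSup_Iic]
end
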